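/- Unweighted weak formulation for functions in the domain: For every f ∈ D(T) and every spherically symmetric test function ξ ∈ C¹_c(S_0), ∫_{S_0} f (Tξ) dx dv = − ∫_{S_0} (T f) ξ dx dv. -/

import Mathlib

/-!
The weight `|φ'(E)|` is a function of the energy, and `T E = 0`, so inserting the test function
`ξ |φ'(E)|` into the weighted weak formulation cancels the weight and gives the unweighted one.
This function is merely continuous, because `φ'` is, and the smooth test functions of the weak
formulation do not include it; two approximations close the gap.

* `C¹` test functions are admissible (`weakT_of_contDiff_one`): convolution with a
  rotation-invariant mollifier (`exists_mollifier`) keeps the spherical symmetry and converges in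
  `C¹`, with supports in a fixed compact subset of `S₀` (`exists_smooth_approx`).
* `|φ'|` is a uniform limit of polynomials `p` on the compact set of energies met on the support
  of `ξ`. The functions `ξ p(E)` are `C¹`, because `E` is `C²`, and `T (ξ p(E)) = (T ξ) p(E)`
  (`transport_mul_energy`).

Both limits pass through `weak_identity_of_approx`: elements of `H`, divided by the weight, are
integrable on compact subsets of `S₀` (`integrableOn_div_weight`), so uniform convergence of the
pair `(Tξ, ξ)` on such a set suffices. No derivative of the weight ever appears.
-/

open MeasureTheory Real Set Filter

noncomputable section

abbrev V3 : Type := Fin 3 → ℝ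

def dot3 (x v : V3) : ℝ := ∑ i, x i * v i

def Lmom (z : V3 × V3) : ℝ := dot3 z.1 z.1 * dot3 z.2 z.2 - dot3 z.1 z.2 ^ 2

def energy (U0 : V3 → ℝ) (z : V3 × V3) : ℝ := dot3 z.2 z.2 / 2 + U0 z.1

def gradV (g : V3 → ℝ) (x : V3) : V3 := fun i => fderiv ℝ g x (Pi.single i 1)

def transport (U0 : V3 → ℝ) (f : V3 × V3 → ℝ) (z : V3 × V3) : ℝ :=
  fderiv ℝ f z (z.2, -gradV U0 z.1)

def S0 (U0 : V3 → ℝ) (E0 : ℝ) : Set (V3 × V3) := {z | energy U0 z < E0}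

def SO3 : Set (Matrix (Fin 3) (Fin 3) ℝ) := {A | A * A.transpose = 1 ∧ A.det = 1}

def rot (A : Matrix (Fin 3) (Fin 3) ℝ) (z : V3 × V3) : V3 × V3 := (A.mulVec z.1, A.mulVec z.2)

def SphSymAE (U0 : V3 → ℝ) (E0 : ℝ) (f : V3 × V3 → ℝ) : Prop :=
  ∀ A ∈ SO3, ∀ᵐ z ∂(volume.restrict (S0 U0 E0)), f (rot A z) = f z

def memH (φd : ℝ → ℝ) (U0 : V3 → ℝ) (E0 : ℝ) (f : V3 × V3 → ℝ) : Prop :=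
  AEStronglyMeasurable f (volume.restrict (S0 U0 E0)) ∧ SphSymAE U0 E0 f ∧
    IntegrableOn (fun z => f z ^ 2 / |φd (energy U0 z)|) (S0 U0 E0)

def innerH (φd : ℝ → ℝ) (U0 : V3 → ℝ) (E0 : ℝ) (f g : V3 × V3 → ℝ) : ℝ :=
  ∫ z in S0 U0 E0, f z * g z / |φd (energy U0 z)|

def IsSmoothTest (U0 : V3 → ℝ) (E0 : ℝ) (ξ : V3 × V3 → ℝ) : Prop :=
  ContDiff ℝ (⊤ : ℕ∞) ξ ∧ HasCompactSupport ξ ∧ tsupport ξ ⊆ S0 U0 E0 ∧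
    ∀ A ∈ SO3, ∀ z, ξ (rot A z) = ξ z

def weakT (φd : ℝ → ℝ) (U0 : V3 → ℝ) (E0 : ℝ) (f μ : V3 × V3 → ℝ) : Prop :=
  ∀ ξ, IsSmoothTest U0 E0 ξ →
    ∫ z in S0 U0 E0, f z * transport U0 ξ z / |φd (energy U0 z)| =
      -∫ z in S0 U0 E0, μ z * ξ z / |φd (energy U0 z)|

def memD (φd : ℝ → ℝ) (U0 : V3 → ℝ) (E0 : ℝ) (f : V3 × V3 → ℝ) : Prop :=
  memH φd U0 E0 f ∧ ∃ μ, memH φd U0 E0 μ ∧ weakT φd U0 E0 f μ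

structure NewtonianSteadyState (φ φd : ℝ → ℝ) (U0 : V3 → ℝ) (E0 : ℝ) : Prop where
  E0_neg : E0 < 0
  φ_nonneg : ∀ e, 0 ≤ φ e
  φ_deriv : ∀ e < E0, HasDerivAt φ (φd e) e
  φd_cont : ContinuousOn φd (Iio E0)
  φd_neg : ∀ e < E0, φd e < 0
  φ_vanish : ∀ e, E0 ≤ e → φ e = 0
  U0_smooth : ContDiff ℝ 2 U0
  U0_symm : ∀ A ∈ SO3, ∀ x : V3, U0 (A.mulVec x) = U0 x
  U0_decay : Tendsto U0 (cocompact V3) (nhds 0)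
  poisson : ∀ x : V3, ∑ i, fderiv ℝ (fun y => gradV U0 y i) x (Pi.single i (1 : ℝ)) =
      4 * Real.pi * ∫ v : V3, φ (energy U0 (x, v))
  S0_bounded : Bornology.IsBounded (S0 U0 E0)

/-- U₀ as a radial function. -/
def U0rad (U0 : V3 → ℝ) (r : ℝ) : ℝ := U0 (Pi.single 0 r)

/-- Particle energy in the coordinates (r,w,L). -/
def energyR (U0 : V3 → ℝ) (p : ℝ × ℝ × ℝ) : ℝ :=
  p.2.1 ^ 2 / 2 + p.2.2 / (2 * p.1 ^ 2) + U0rad U0 p.1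

/-- The set S₀ in the coordinates (r,w,L). -/
def S0r (U0 : V3 → ℝ) (E0 : ℝ) : Set (ℝ × ℝ × ℝ) :=
  {p | 0 < p.1 ∧ 0 < p.2.2 ∧ energyR U0 p < E0}

/-- The coordinates (r,w,L) = (|x|, x·v/|x|, |x×v|²) of a point (x,v). -/
def coordR (z : V3 × V3) : ℝ × ℝ × ℝ :=
  (Real.sqrt (dot3 z.1 z.1), dot3 z.1 z.2 / Real.sqrt (dot3 z.1 z.1), Lmom z)

/-- The effective potential ψ_L(r) = U₀(r) + L/(2r²). -/
def psiEff (U0 : V3 → ℝ) (L r : ℝ) : ℝ := U0rad U0 r + L / (2 * r ^ 2)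

/-- The derivative ψ_L'(r). -/
def psiEffD (U0 : V3 → ℝ) (L r : ℝ) : ℝ := deriv (U0rad U0) r - L / r ^ 3

/-- rL L is the unique minimizer of the effective potential ψ_L on (0,∞),
    with negative minimum value. -/
def IsEffMinimizer (U0 : V3 → ℝ) (rL : ℝ → ℝ) : Prop :=
  ∀ L > 0, 0 < rL L ∧ IsMinOn (psiEff U0 L) (Ioi 0) (rL L) ∧ psiEff U0 L (rL L) < 0 ∧
    ∀ r ∈ Ioi (0:ℝ), IsMinOn (psiEff U0 L) (Ioi 0) r → r = rL L

/-- rm E L < rp E L are the turning points, i.e. the radii solving ψ_L(r) = E. -/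
def AreTurningPoints (U0 : V3 → ℝ) (E0 : ℝ) (rL : ℝ → ℝ) (rm rp : ℝ → ℝ → ℝ) : Prop :=
  ∀ L > 0, ∀ E, psiEff U0 L (rL L) < E → E < E0 →
    0 < rm E L ∧ rm E L < rL L ∧ rL L < rp E L ∧
      psiEff U0 L (rm E L) = E ∧ psiEff U0 L (rp E L) = E ∧
      ∀ r > 0, psiEff U0 L r = E → r = rm E L ∨ r = rp E L

/-- RW t r w L is the solution of the radial characteristic system
    ṙ = w, ẇ = -ψ_L'(r) with initial data (r,w). -/
def IsRadialFlow (U0 : V3 → ℝ) (RW : ℝ → ℝ → ℝ → ℝ → ℝ × ℝ) : Prop :=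
  ∀ r w L : ℝ, RW 0 r w L = (r, w) ∧
    ∀ t : ℝ, HasDerivAt (fun s => RW s r w L)
      ((RW t r w L).2, -psiEffD U0 L (RW t r w L).1) t

/-- The radial period T(E,L). -/
def Tper (U0 : V3 → ℝ) (rm rp : ℝ → ℝ → ℝ) (E L : ℝ) : ℝ :=
  2 * ∫ r in rm E L..rp E L, 1 / Real.sqrt (2 * E - 2 * psiEff U0 L r)

/-- The projection (P f)(E,L), computed from the representative fr of f in
    the coordinates (r,w,L). -/
def Pcoef (U0 : V3 → ℝ) (rm rp : ℝ → ℝ → ℝ) (RW : ℝ → ℝ → ℝ → ℝ → ℝ × ℝ)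
    (fr : ℝ × ℝ × ℝ → ℝ) (E L : ℝ) : ℝ :=
  ∫ t in (0:ℝ)..1,
    fr ((RW (t * Tper U0 rm rp E L) (rm E L) 0 L).1,
        (RW (t * Tper U0 rm rp E L) (rm E L) 0 L).2, L)


/-! ### The phase-space Lebesgue measure and rotations -/

theorem isAddHaar_phase : (volume : Measure (V3 × V3)).IsAddHaarMeasure :=
  Measure.prod.instIsAddHaarMeasure _ _

theorem isNegInvariant_phase : (volume : Measure (V3 × V3)).IsNegInvariant :=
  have := isAddHaar_phase
  Measure.IsAddHaarMeasure.isNegInvariant_of_innerRegular _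

theorem SO3_transpose_mul {A : Matrix (Fin 3) (Fin 3) ℝ} (hA : A ∈ SO3) :
    A.transpose * A = 1 := mul_eq_one_comm.mp hA.1

theorem dot3_eq_dotProduct (x v : V3) : dot3 x v = x ⬝ᵥ v := rfl

theorem dot3_mulVec {A : Matrix (Fin 3) (Fin 3) ℝ} (hA : A ∈ SO3) (x v : V3) :
    dot3 (A.mulVec x) (A.mulVec v) = dot3 x v := by
  rw [dot3_eq_dotProduct, dot3_eq_dotProduct, Matrix.dotProduct_mulVec, Matrix.vecMul_mulVec,
    ← Matrix.mulVec_transpose]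
  simp [SO3_transpose_mul hA]

theorem rot_sub (A : Matrix (Fin 3) (Fin 3) ℝ) (z w : V3 × V3) :
    rot A (z - w) = rot A z - rot A w := by
  simp [rot, Matrix.mulVec_sub]

theorem measurePreserving_mulVec {A : Matrix (Fin 3) (Fin 3) ℝ} (hA : A ∈ SO3) :
    MeasurePreserving (fun x : V3 => A.mulVec x) volume volume := by
  have h := Real.map_matrix_volume_pi_eq_smul_volume_pi (M := A) (by rw [hA.2]; norm_num)
  refine ⟨by fun_prop, ?_⟩
  rw [hA.2] at h
  simp only [inv_one, abs_one, ENNReal.ofReal_one, one_smul] at h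
  exact h

theorem measurePreserving_rot {A : Matrix (Fin 3) (Fin 3) ℝ} (hA : A ∈ SO3) :
    MeasurePreserving (rot A) volume volume :=
  (measurePreserving_mulVec hA).prod (measurePreserving_mulVec hA)

/-- A rotation of phase space as a homeomorphism, with inverse the transposed rotation. -/
def rotHomeo (A : Matrix (Fin 3) (Fin 3) ℝ) (hA : A ∈ SO3) : V3 × V3 ≃ₜ V3 × V3 where
  toFun := rot A
  invFun := rot A.transpose
  left_inv z := by simp [rot, SO3_transpose_mul hA]
  right_inv z := by simp [rot, hA.1]
  continuous_toFun := by unfold rot; fun_prop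
  continuous_invFun := by unfold rot; fun_prop

theorem integral_comp_rot {A : Matrix (Fin 3) (Fin 3) ℝ} (hA : A ∈ SO3) (g : V3 × V3 → ℝ) :
    ∫ z, g (rot A z) = ∫ z, g z :=
  (measurePreserving_rot hA).integral_comp (rotHomeo A hA).measurableEmbedding g

/-! ### Rotation-invariant mollification -/

/-- Rotation-invariant mollifiers of arbitrarily small support exist. The bump functions built
from the supremum norm of `V3 × V3` are not rotation invariant, so the profile is taken as a
function of `|x|² + |v|²`. -/
theorem exists_mollifier {δ : ℝ} (hδ : 0 < δ) :
    ∃ ρ : V3 × V3 → ℝ, ContDiff ℝ (⊤ : ℕ∞) ρ ∧ HasCompactSupport ρ ∧ (∀ z, 0 ≤ ρ z) ∧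
      ∫ z, ρ z = 1 ∧ Function.support ρ ⊆ Metric.ball 0 δ ∧
      ∀ A ∈ SO3, ∀ z, ρ (rot A z) = ρ z := by
  have := isAddHaar_phase
  set q : V3 × V3 → ℝ := fun z => dot3 z.1 z.1 + dot3 z.2 z.2 with hq
  have hqs : ContDiff ℝ (⊤ : ℕ∞) q := by
    simp only [hq, dot3]; fun_prop
  set b : V3 × V3 → ℝ := fun z => Real.smoothTransition (δ ^ 2 - q z) with hb
  have hbs : ContDiff ℝ (⊤ : ℕ∞) b :=
    Real.smoothTransition.contDiff.comp (contDiff_const.sub hqs)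
  have hb0 : ∀ z, 0 ≤ b z := fun z => Real.smoothTransition.nonneg _
  have hsupp : Function.support b ⊆ Metric.ball 0 δ := by
    intro z hz
    have hlt : q z < δ ^ 2 := by
      by_contra! h
      exact hz (Real.smoothTransition.zero_of_nonpos (by linarith))
    have hpt : ∀ (x : V3) (i : Fin 3), x i ^ 2 ≤ dot3 x x := fun x i => by
      have := Finset.single_le_sum (f := fun i => x i * x i) (fun i _ => mul_self_nonneg _)
        (Finset.mem_univ i)
      simpa [dot3, pow_two] using this
    have hnn : ∀ x : V3, 0 ≤ dot3 x x := fun x => (sq_nonneg (x 0)).trans (hpt x 0)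
    have hcomp : ∀ x : V3, dot3 x x < δ ^ 2 → ‖x‖ < δ := fun x hx => by
      rw [pi_norm_lt_iff hδ]
      exact fun i => abs_lt_of_sq_lt_sq ((hpt x i).trans_lt hx) hδ.le
    rw [mem_ball_zero_iff, Prod.norm_def, max_lt_iff]
    exact ⟨hcomp _ (by simp only [hq] at hlt; linarith [hnn z.2]),
      hcomp _ (by simp only [hq] at hlt; linarith [hnn z.1])⟩
  have hbc : HasCompactSupport b :=
    HasCompactSupport.of_support_subset_isCompact (isCompact_closedBall 0 δ)
      (hsupp.trans Metric.ball_subset_closedBall)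
  have hpos : 0 < ∫ z, b z :=
    hbs.continuous.integral_pos_of_hasCompactSupport_nonneg_nonzero hbc hb0 (x := 0)
      (Real.smoothTransition.pos_of_pos (by simp [hq, dot3]; positivity)).ne'
  refine ⟨fun z => (∫ w, b w)⁻¹ * b z, contDiff_const.mul hbs, hbc.mul_left,
    fun z => mul_nonneg (inv_nonneg.2 hpos.le) (hb0 z), ?_, ?_, ?_⟩
  · rw [integral_const_mul, inv_mul_cancel₀ hpos.ne']
  · exact (Function.support_mul_subset_right _ _).trans hsupp
  · intro A hA z
    simp only [hb, hq, rot, dot3_mulVec hA]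

/-- A `C¹` rotation-invariant function of compact support is approximated in `C¹` norm by smooth
rotation-invariant functions whose supports lie in an arbitrarily small neighbourhood of the
original support. -/
theorem exists_smooth_approx {ξ : V3 × V3 → ℝ} (h1 : ContDiff ℝ 1 ξ) (h2 : HasCompactSupport ξ)
    (h4 : ∀ A ∈ SO3, ∀ z, ξ (rot A z) = ξ z) {δ ε : ℝ} (hδ : 0 < δ) (hε : 0 < ε) :
    ∃ η : V3 × V3 → ℝ, ContDiff ℝ (⊤ : ℕ∞) η ∧ HasCompactSupport η ∧
      tsupport η ⊆ Metric.cthickening δ (tsupport ξ) ∧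
      (∀ A ∈ SO3, ∀ z, η (rot A z) = η z) ∧ (∀ z, |η z - ξ z| ≤ ε) ∧
      ∀ z, ‖fderiv ℝ η z - fderiv ℝ ξ z‖ ≤ ε := by
  have := isAddHaar_phase
  have := isNegInvariant_phase
  have hdc : Continuous (fderiv ℝ ξ) := h1.continuous_fderiv (by norm_num)
  obtain ⟨δ₁, hδ₁, hu₁⟩ := Metric.uniformContinuous_iff.1
    (h2.uniformContinuous_of_continuous h1.continuous) ε hε
  obtain ⟨δ₂, hδ₂, hu₂⟩ := Metric.uniformContinuous_iff.1
    ((h2.fderiv (𝕜 := ℝ)).uniformContinuous_of_continuous hdc) ε hε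
  have hr : 0 < min δ (min δ₁ δ₂) := lt_min hδ (lt_min hδ₁ hδ₂)
  set r := min δ (min δ₁ δ₂) with hrdef
  have hr1 : r ≤ δ := min_le_left _ _
  have hr2 : r ≤ δ₁ := (min_le_right _ _).trans (min_le_left _ _)
  have hr3 : r ≤ δ₂ := (min_le_right _ _).trans (min_le_right _ _)
  obtain ⟨ρ, hρs, hρc, hρ0, hρ1, hρsupp, hρrot⟩ := exists_mollifier hr
  have hfd : ∀ z, fderiv ℝ (convolution ρ ξ (ContinuousLinearMap.lsmul ℝ ℝ) volume) z =
      convolution ρ (fderiv ℝ ξ) (ContinuousLinearMap.lsmul ℝ ℝ) volume z := fun z => by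
    rw [(h2.hasFDerivAt_convolution_right (ContinuousLinearMap.lsmul ℝ ℝ)
      hρs.continuous.locallyIntegrable h1 z).fderiv]
    rfl
  refine ⟨convolution ρ ξ (ContinuousLinearMap.lsmul ℝ ℝ) volume,
    hρc.contDiff_convolution_left _ hρs h1.continuous.locallyIntegrable,
    hρc.convolution _ h2, ?_, ?_, ?_, ?_⟩
  · refine closure_minimal ?_ Metric.isClosed_cthickening
    refine (support_convolution_subset _).trans ?_
    rintro _ ⟨u, hu, w, hw, rfl⟩
    refine Metric.mem_cthickening_of_dist_le _ w _ _ (subset_tsupport _ hw) ?_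
    have := hρsupp hu
    rw [mem_ball_zero_iff] at this
    simpa [dist_eq_norm] using (this.le.trans hr1)
  · intro A hA z
    simp only [convolution, ContinuousLinearMap.lsmul_apply]
    rw [← integral_comp_rot hA]
    simp only [← rot_sub, hρrot A hA, h4 A hA]
  · intro z
    rw [← Real.dist_eq]
    refine dist_convolution_le hε.le hρsupp hρ0 hρ1 h1.continuous.aestronglyMeasurable ?_
    exact fun x hx => (hu₁ (lt_of_lt_of_le hx hr2)).le
  · intro z
    rw [hfd, ← dist_eq_norm]
    refine dist_convolution_le hε.le hρsupp hρ0 hρ1 hdc.aestronglyMeasurable ?_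
    exact fun x hx => (hu₂ (lt_of_lt_of_le hx hr3)).le

/-! ### The transport operator, the energy and the weight -/

theorem contDiff_energy {U0 : V3 → ℝ} (hU : ContDiff ℝ 2 U0) : ContDiff ℝ 2 (energy U0) := by
  unfold energy dot3; fun_prop

theorem energy_rot {φ φd : ℝ → ℝ} {U0 : V3 → ℝ} {E0 : ℝ} (hS : NewtonianSteadyState φ φd U0 E0)
    {A : Matrix (Fin 3) (Fin 3) ℝ} (hA : A ∈ SO3) (z : V3 × V3) :
    energy U0 (rot A z) = energy U0 z := by
  simp only [energy, rot, dot3_mulVec hA, hS.U0_symm A hA]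

theorem isOpen_S0 {U0 : V3 → ℝ} (hU : ContDiff ℝ 2 U0) (E0 : ℝ) : IsOpen (S0 U0 E0) :=
  isOpen_lt (contDiff_energy hU).continuous continuous_const

theorem continuous_field {U0 : V3 → ℝ} (hU : ContDiff ℝ 2 U0) :
    Continuous fun z : V3 × V3 => (z.2, -gradV U0 z.1) := by
  have h : Continuous (fderiv ℝ U0) := hU.continuous_fderiv (by norm_num)
  unfold gradV; fun_prop

theorem continuous_transport {U : V3 → ℝ} {ξ : V3 × V3 → ℝ} (hU : ContDiff ℝ 2 U)
    (h1 : ContDiff ℝ 1 ξ) : Continuous (transport U ξ) :=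
  (h1.continuous_fderiv (by norm_num)).clm_apply (continuous_field hU)

theorem transport_eq_zero {U0 : V3 → ℝ} {ξ : V3 × V3 → ℝ} {z : V3 × V3}
    (hz : z ∉ tsupport ξ) : transport U0 ξ z = 0 := by
  simp [transport, fderiv_of_notMem_tsupport ℝ hz]

/-- The energy is conserved along the characteristic flow. -/
theorem transport_energy {U0 : V3 → ℝ} (hU : ContDiff ℝ 2 U0) (z : V3 × V3) :
    transport U0 (energy U0) z = 0 := by
  have hv : ∀ i : Fin 3, HasFDerivAt (fun w : V3 × V3 => w.2 i)
      ((ContinuousLinearMap.proj (R := ℝ) (φ := fun _ : Fin 3 => ℝ) i).comp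
        (ContinuousLinearMap.snd ℝ V3 V3)) z := fun i =>
    ((ContinuousLinearMap.proj (R := ℝ) (φ := fun _ : Fin 3 => ℝ) i).comp
        (ContinuousLinearMap.snd ℝ V3 V3)).hasFDerivAt
  have hx : HasFDerivAt (fun w : V3 × V3 => U0 w.1)
      ((fderiv ℝ U0 z.1).comp (ContinuousLinearMap.fst ℝ V3 V3)) z :=
    ((hU.differentiable (by norm_num)) z.1).hasFDerivAt.comp z hasFDerivAt_fst
  have hE := ((HasFDerivAt.fun_sum (u := Finset.univ)
    (fun i _ => (hv i).mul (hv i))).mul_const (2⁻¹ : ℝ)).add hx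
  have hE' : HasFDerivAt (energy U0) _ z := hE
  have hsum : fderiv ℝ U0 z.1 z.2 = ∑ i, z.2 i * gradV U0 z.1 i := by
    conv_lhs => rw [← Finset.univ_sum_single z.2]
    rw [map_sum]
    refine Finset.sum_congr rfl fun i _ => ?_
    rw [gradV, ← smul_eq_mul, ← map_smul, ← Pi.single_smul, smul_eq_mul, mul_one]
  rw [transport, hE'.fderiv]
  simp [hsum, Fin.sum_univ_three]
  ring

/-- Functions of the energy behave as constants under the transport operator. -/
theorem transport_mul_energy {U0 : V3 → ℝ} (hU : ContDiff ℝ 2 U0) {ξ : V3 × V3 → ℝ}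
    (h1 : ContDiff ℝ 1 ξ) (p : Polynomial ℝ) (z : V3 × V3) :
    transport U0 (fun w => ξ w * p.eval (energy U0 w)) z =
      transport U0 ξ z * p.eval (energy U0 z) := by
  have hξ := (h1.differentiable (by norm_num) z).hasFDerivAt
  have hE := ((contDiff_energy hU).differentiable (by norm_num) z).hasFDerivAt
  have hp := (p.hasDerivAt (energy U0 z)).comp_hasFDerivAt z hE
  have hprod : HasFDerivAt (fun w => ξ w * p.eval (energy U0 w)) _ z := hξ.mul hp
  have h0 := transport_energy hU z
  rw [transport] at h0
  rw [transport, hprod.fderiv]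
  simp [h0, transport, mul_comm]

section Weight

variable {φ φd : ℝ → ℝ} {U0 : V3 → ℝ} {E0 : ℝ}

theorem continuousOn_weight (hS : NewtonianSteadyState φ φd U0 E0) :
    ContinuousOn (fun z => |φd (energy U0 z)|) (S0 U0 E0) :=
  (hS.φd_cont.comp (contDiff_energy hS.U0_smooth).continuous.continuousOn fun _ h => h).abs

theorem weight_pos (hS : NewtonianSteadyState φ φd U0 E0) {z : V3 × V3} (hz : z ∈ S0 U0 E0) :
    0 < |φd (energy U0 z)| := abs_pos.2 (hS.φd_neg _ hz).ne

/-- On compact subsets of `S₀` the weight is bounded above and away from zero, so elements of `H`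
are square integrable there, hence integrable, and stay so after division by the weight. -/
theorem integrableOn_div_weight (hS : NewtonianSteadyState φ φd U0 E0) {f : V3 × V3 → ℝ}
    (hf : memH φd U0 E0 f) {K : Set (V3 × V3)} (hK : IsCompact K) (hKS : K ⊆ S0 U0 E0) :
    IntegrableOn (fun z => f z / |φd (energy U0 z)|) K := by
  have := isAddHaar_phase
  have hWK := (continuousOn_weight hS).mono hKS
  have hsq : IntegrableOn (fun z => f z ^ 2) K := by
    refine ((hf.2.2.mono_set hKS).mul_continuousOn hWK hK).congr_fun ?_ hK.measurableSet
    intro z hz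
    exact div_mul_cancel₀ _ (weight_pos hS (hKS hz)).ne'
  have hf1 : IntegrableOn f K := by
    refine Integrable.mono' (g := fun z => 1 + f z ^ 2)
      (Integrable.add (integrableOn_const hK.measure_lt_top.ne) hsq)
      (hf.1.mono_measure (Measure.restrict_mono hKS le_rfl)) ?_
    refine Eventually.of_forall fun z => ?_
    rw [Real.norm_eq_abs, ← sq_abs]
    nlinarith [sq_nonneg (|f z| - 1)]
  exact hf1.mul_continuousOn (hWK.inv₀ fun z hz => (weight_pos hS (hKS hz)).ne') hK

theorem abs_setIntegral_sub_le {F a g : V3 × V3 → ℝ} {K : Set (V3 × V3)} {ε : ℝ}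
    (hK : IsCompact K) (hF : IntegrableOn F K) (ha : ContinuousOn a K) (hg : ContinuousOn g K)
    (h : ∀ z ∈ K, |a z - g z| ≤ ε) :
    |(∫ z in K, F z * a z) - ∫ z in K, F z * g z| ≤ ε * ∫ z in K, |F z| := by
  have := isAddHaar_phase
  rw [← integral_sub (hF.mul_continuousOn ha hK) (hF.mul_continuousOn hg hK),
    ← integral_const_mul, ← Real.norm_eq_abs]
  refine norm_integral_le_of_norm_le (hF.abs.const_mul ε) ?_
  filter_upwards [ae_restrict_mem hK.measurableSet] with z hz
  rw [← mul_sub, norm_mul, Real.norm_eq_abs, Real.norm_eq_abs, mul_comm]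
  exact mul_le_mul_of_nonneg_right (h z hz) (abs_nonneg _)

theorem setIntegral_weight_eq (hS : NewtonianSteadyState φ φd U0 E0) (f : V3 × V3 → ℝ)
    {a : V3 × V3 → ℝ} {K : Set (V3 × V3)} (hKS : K ⊆ S0 U0 E0) (ha : ∀ z ∉ K, a z = 0) :
    ∫ z in S0 U0 E0, f z * a z / |φd (energy U0 z)| =
      ∫ z in K, f z / |φd (energy U0 z)| * a z := by
  rw [setIntegral_eq_of_subset_of_forall_sdiff_eq_zero
    (isOpen_S0 hS.U0_smooth E0).measurableSet hKS fun z hz => by simp [ha z hz.2]]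
  exact integral_congr_ae (Eventually.of_forall fun z => by simp only; ring)

/-- The weak identity is stable under uniform approximation of the pair `(g, h)`, in the role
of `(Tξ, ξ)`, with supports in a fixed compact subset of `S₀`. -/
theorem weak_identity_of_approx (hS : NewtonianSteadyState φ φd U0 E0) {f μ : V3 × V3 → ℝ}
    (hf : memH φd U0 E0 f) (hμ : memH φd U0 E0 μ) {K : Set (V3 × V3)} (hK : IsCompact K)
    (hKS : K ⊆ S0 U0 E0) {g h : V3 × V3 → ℝ} (hg : ContinuousOn g K) (hh : ContinuousOn h K)
    (h0 : ∀ z ∉ K, g z = 0 ∧ h z = 0)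
    (H : ∀ ε > 0, ∃ a b : V3 × V3 → ℝ, ContinuousOn a K ∧ ContinuousOn b K ∧
      (∀ z ∉ K, a z = 0 ∧ b z = 0) ∧ (∀ z ∈ K, |a z - g z| ≤ ε ∧ |b z - h z| ≤ ε) ∧
      ∫ z in S0 U0 E0, f z * a z / |φd (energy U0 z)| =
        -∫ z in S0 U0 E0, μ z * b z / |φd (energy U0 z)|) :
    ∫ z in S0 U0 E0, f z * g z / |φd (energy U0 z)| =
      -∫ z in S0 U0 E0, μ z * h z / |φd (energy U0 z)| := by
  have hF := integrableOn_div_weight hS hf hK hKS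
  have hM := integrableOn_div_weight hS hμ hK hKS
  set C := ∫ z in K, |f z / (|φd (energy U0 z)|)| with hC
  set D := ∫ z in K, |μ z / (|φd (energy U0 z)|)| with hD
  have hC0 : 0 ≤ C := integral_nonneg fun _ => abs_nonneg _
  have hD0 : 0 ≤ D := integral_nonneg fun _ => abs_nonneg _
  rw [setIntegral_weight_eq hS f hKS fun z hz => (h0 z hz).1,
    setIntegral_weight_eq hS μ hKS fun z hz => (h0 z hz).2]
  rw [← sub_eq_zero, ← abs_eq_zero]
  refine le_antisymm (le_of_forall_pos_le_add fun ε hε => ?_) (abs_nonneg _)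
  have hpos : 0 < C + D + 1 := by positivity
  obtain ⟨a, b, ha, hb, hab0, hab, hEq⟩ := H (ε / (C + D + 1)) (by positivity)
  rw [setIntegral_weight_eq hS f hKS fun z hz => (hab0 z hz).1,
    setIntegral_weight_eq hS μ hKS fun z hz => (hab0 z hz).2] at hEq
  have e1 := abs_setIntegral_sub_le hK hF ha hg fun z hz => (hab z hz).1
  have e2 := abs_setIntegral_sub_le hK hM hb hh fun z hz => (hab z hz).2
  rw [← hC] at e1
  rw [← hD] at e2
  have e3 : ε / (C + D + 1) * C + ε / (C + D + 1) * D ≤ ε := by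
    rw [← mul_add, div_mul_eq_mul_div, div_le_iff₀ hpos]
    nlinarith
  rw [abs_le] at e1 e2 ⊢
  constructor <;> linarith [e1.1, e1.2, e2.1, e2.2]

/-! ### Enlarging the class of test functions -/

/-- The weak formulation, stated for smooth test functions, holds for `C¹` test functions. -/
theorem weakT_of_contDiff_one (hS : NewtonianSteadyState φ φd U0 E0) {f μ : V3 × V3 → ℝ}
    (hf : memH φd U0 E0 f) (hμ : memH φd U0 E0 μ) (hw : weakT φd U0 E0 f μ)
    {ξ : V3 × V3 → ℝ} (hξ1 : ContDiff ℝ 1 ξ) (hξ2 : HasCompactSupport ξ)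
    (hξ3 : tsupport ξ ⊆ S0 U0 E0) (hξ4 : ∀ A ∈ SO3, ∀ z, ξ (rot A z) = ξ z) :
    ∫ z in S0 U0 E0, f z * transport U0 ξ z / |φd (energy U0 z)| =
      -∫ z in S0 U0 E0, μ z * ξ z / |φd (energy U0 z)| := by
  have hU := hS.U0_smooth
  obtain ⟨δ, hδ, hδS⟩ := hξ2.isCompact.exists_cthickening_subset_open (isOpen_S0 hU E0) hξ3
  have hK : IsCompact (Metric.cthickening δ (tsupport ξ)) := hξ2.isCompact.cthickening
  have hsub : tsupport ξ ⊆ Metric.cthickening δ (tsupport ξ) :=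
    Metric.self_subset_cthickening _
  obtain ⟨M, hM⟩ := hK.exists_bound_of_continuousOn (continuous_field hU).continuousOn
  refine weak_identity_of_approx hS hf hμ hK hδS (continuous_transport hU hξ1).continuousOn
    hξ1.continuous.continuousOn
    (fun z hz => ⟨transport_eq_zero fun h => hz (hsub h),
      image_eq_zero_of_notMem_tsupport fun h => hz (hsub h)⟩) fun ε hε => ?_
  have hM1 : 0 < |M| + 1 := by positivity
  -- `M` bounds the characteristic field, so an error `ε / (|M| + 1)` in the derivative of the
  -- test function costs at most `ε` in its transport.
  obtain ⟨η, hη, hηc, hηs, hηr, hη0, hη1⟩ := exists_smooth_approx hξ1 hξ2 hξ4 hδ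
    (lt_min hε (div_pos hε hM1))
  have hη' : ContDiff ℝ 1 η := hη.of_le (by exact_mod_cast le_top)
  refine ⟨transport U0 η, η, (continuous_transport hU hη').continuousOn,
    hη.continuous.continuousOn, fun z hz => ⟨transport_eq_zero fun h => hz (hηs h),
      image_eq_zero_of_notMem_tsupport fun h => hz (hηs h)⟩,
    fun z hz => ⟨?_, (hη0 z).trans (min_le_left _ _)⟩,
    hw η ⟨hη, hηc, hηs.trans hδS, hηr⟩⟩
  rw [transport, transport, ← sub_apply, ← Real.norm_eq_abs]
  calc _ ≤ ‖fderiv ℝ η z - fderiv ℝ ξ z‖ * ‖(z.2, -gradV U0 z.1)‖ :=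
        ContinuousLinearMap.le_opNorm _ _
    _ ≤ ε / (|M| + 1) * (|M| + 1) := by
        refine mul_le_mul ((hη1 z).trans (min_le_right _ _)) ?_ (norm_nonneg _) (by positivity)
        linarith [hM z hz, le_abs_self M]
    _ = ε := div_mul_cancel₀ _ hM1.ne'

end Weight

/-- Corollary 3.2: unweighted weak formulation. For every f ∈ D(T) (with weak
    derivative μ = T f ∈ H) and every spherically symmetric test function
    ξ ∈ C¹_c(S₀), ∫_{S₀} f (Tξ) = - ∫_{S₀} (T f) ξ. -/
theorem transport_unweighted_weak
    (φ φd : ℝ → ℝ) (U0 : V3 → ℝ) (E0 : ℝ)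
    (hS : NewtonianSteadyState φ φd U0 E0)
    (f μ : V3 × V3 → ℝ)
    (hf : memH φd U0 E0 f) (hμ : memH φd U0 E0 μ) (hw : weakT φd U0 E0 f μ)
    (ξ : V3 × V3 → ℝ)
    (hξ1 : ContDiff ℝ 1 ξ) (hξ2 : HasCompactSupport ξ) (hξ3 : tsupport ξ ⊆ S0 U0 E0)
    (hξ4 : ∀ A ∈ SO3, ∀ z, ξ (rot A z) = ξ z) :
    ∫ z in S0 U0 E0, f z * transport U0 ξ z = -∫ z in S0 U0 E0, μ z * ξ z := by
  have hU := hS.U0_smooth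
  have hEc := (contDiff_energy hU).continuous
  have hK : IsCompact (tsupport ξ) := hξ2.isCompact
  have hTc := continuous_transport hU hξ1
  -- The energies met on the support of `ξ` fill a compact subset of `(-∞, E₀)`; one more energy
  -- value is inserted so that the interval containing them exists even if `ξ = 0`.
  have hR : IsCompact (insert (E0 - 1) (energy U0 '' tsupport ξ)) := (hK.image hEc).insert _
  have hRE : insert (E0 - 1) (energy U0 '' tsupport ξ) ⊆ Iio E0 := by
    refine insert_subset (by simp) ?_
    rintro _ ⟨z, hz, rfl⟩
    exact hξ3 hz
  obtain ⟨a, ha⟩ := hR.bddBelow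
  obtain ⟨b, hbR, hb⟩ := hR.exists_isGreatest (insert_nonempty _ _)
  have hIcc : ∀ z ∈ tsupport ξ, energy U0 z ∈ Icc a b := fun z hz =>
    ⟨ha (mem_insert_of_mem _ (mem_image_of_mem _ hz)),
      hb (mem_insert_of_mem _ (mem_image_of_mem _ hz))⟩
  have hφc : ContinuousOn (fun e => |φd e|) (Icc a b) :=
    (hS.φd_cont.mono fun e he => he.2.trans_lt (hRE hbR)).abs
  obtain ⟨M, hM⟩ := hK.exists_bound_of_continuousOn hξ1.continuous.continuousOn
  obtain ⟨N, hN⟩ := hK.exists_bound_of_continuousOn hTc.continuousOn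
  have hWc := (continuousOn_weight hS).mono hξ3
  -- The weighted identity with `ξ |φ'(E)|` in place of `ξ`.
  have key : ∫ z in S0 U0 E0, f z * (transport U0 ξ z * |φd (energy U0 z)|) /
        |φd (energy U0 z)| =
      -∫ z in S0 U0 E0, μ z * (ξ z * |φd (energy U0 z)|) / |φd (energy U0 z)| := by
    refine weak_identity_of_approx hS hf hμ hK hξ3 (hTc.continuousOn.mul hWc)
      (hξ1.continuous.continuousOn.mul hWc)
      (fun z hz => ⟨by simp [transport_eq_zero hz],
        by simp [image_eq_zero_of_notMem_tsupport hz]⟩) fun ε hε => ?_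
    have hpos : 0 < |M| + |N| + 1 := by positivity
    obtain ⟨p, hp⟩ := exists_polynomial_near_of_continuousOn a b _ hφc (ε / (|M| + |N| + 1))
      (by positivity)
    have hpE : ContDiff ℝ 1 fun z => p.eval (energy U0 z) :=
      (by simpa using p.contDiff_aeval (𝕜 := ℝ) 1 : ContDiff ℝ 1 fun e : ℝ => p.eval e).comp
        ((contDiff_energy hU).of_le (by norm_num))
    have hbd : ∀ c : ℝ, |c| ≤ |M| + |N| + 1 → ∀ z ∈ tsupport ξ,
        |c * p.eval (energy U0 z) - c * (|φd (energy U0 z)|)| ≤ ε := fun c hc z hz => by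
      rw [← mul_sub, abs_mul]
      calc _ ≤ (|M| + |N| + 1) * (ε / (|M| + |N| + 1)) :=
            mul_le_mul hc (hp _ (hIcc z hz)).le (abs_nonneg _) hpos.le
        _ = ε := mul_div_cancel₀ _ hpos.ne'
    refine ⟨fun z => transport U0 ξ z * p.eval (energy U0 z),
      fun z => ξ z * p.eval (energy U0 z), (hTc.mul hpE.continuous).continuousOn,
      (hξ1.mul hpE).continuous.continuousOn,
      fun z hz => ⟨by simp [transport_eq_zero hz],
        by simp [image_eq_zero_of_notMem_tsupport hz]⟩,
      fun z hz => ⟨hbd _ ?_ z hz, hbd _ ?_ z hz⟩, ?_⟩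
    · have := hN z hz
      rw [Real.norm_eq_abs] at this
      linarith [le_abs_self N, abs_nonneg M]
    · have := hM z hz
      rw [Real.norm_eq_abs] at this
      linarith [le_abs_self M, abs_nonneg N]
    · have h := weakT_of_contDiff_one hS hf hμ hw (hξ1.mul hpE) hξ2.mul_right
        ((tsupport_mul_subset_left).trans hξ3)
        (fun A hA z => by simp only [hξ4 A hA, energy_rot hS hA])
      simpa only [transport_mul_energy hU hξ1] using h
  have hmeas : MeasurableSet (S0 U0 E0) := (isOpen_S0 hU E0).measurableSet
  have hcancel : ∀ u v : V3 × V3 → ℝ,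
      ∫ z in S0 U0 E0, u z * (v z * |φd (energy U0 z)|) / |φd (energy U0 z)| =
        ∫ z in S0 U0 E0, u z * v z := fun u v =>
    setIntegral_congr_fun hmeas fun z hz => by
      have := (weight_pos hS hz).ne'
      field_simp
  rwa [hcancel, hcancel] at key

end
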